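/- (Theorem 2.) Assume Δ = 0, γ ≠ 4, and (α, β) ≠ (0, 0). Let n ≥ 1 be an integer such that (s₂ ∘ s₃)ⁿ = z₁. Let λ₁, λ₂, λ₃ ∈ K and set s₁' := s₁ ∘ τ(λ₁·c₁), s₂' := s₂ ∘ τ(λ₂·c₂), s₃' := s₃ ∘ τ(λ₃·c₃). Then (s₁' ∘ (s₂' ∘ s₃')ⁿ)² = id_M if and only if (4−γ)·λ₁ + (l+2)·λ₂ + (m+2)·λ₃ = −1. -/

import Mathlib

noncomputable section

variable {K : Type*} [Field K] [CharZero K]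

/-- The linear functional `x ↦ c 0 * x 0 + c 1 * x 1 + c 2 * x 2` on `K³`. -/
def lf (c : Fin 3 → K) : (Fin 3 → K) →ₗ[K] K :=
  c 0 • LinearMap.proj 0 + c 1 • LinearMap.proj 1 + c 2 • LinearMap.proj 2

/-- `s₁ : x ↦ x − (2x₁ − α x₂ − β x₃)·a₁` where `a₁ = Pi.single 0 1`. -/
def s1 (α β : K) : Module.End K (Fin 3 → K) :=
  LinearMap.id - (lf ![2, -α, -β]).smulRight (Pi.single 0 1)

/-- `s₂ : x ↦ x − (−x₁ + 2x₂ − l·x₃)·a₂`. -/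
def s2 (l : K) : Module.End K (Fin 3 → K) :=
  LinearMap.id - (lf ![-1, 2, -l]).smulRight (Pi.single 1 1)

/-- `s₃ : x ↦ x − (−x₁ − m·x₂ + 2x₃)·a₃`. -/
def s3 (m : K) : Module.End K (Fin 3 → K) :=
  LinearMap.id - (lf ![-1, -m, 2]).smulRight (Pi.single 2 1)

/-- `b = b₁ = (4−γ)a₁ + (l+2)a₂ + (m+2)a₃`, with `γ = l·m`. -/
def bvec (l m : K) : Fin 3 → K := ![4 - l * m, l + 2, m + 2]

/-- `b₂ = (2α+βm)a₁ + (4−β)a₂ + (α+2m)a₃`. -/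
def b2vec (α β l m : K) : Fin 3 → K := ![2*α + β*m, 4 - β, α + 2*m]

/-- `b₃ = (2β+αl)a₁ + (β+2l)a₂ + (4−α)a₃`. -/
def b3vec (α β l m : K) : Fin 3 → K := ![2*β + α*l, β + 2*l, 4 - α]

/-- `τ(λ,μ) : a₁ ↦ a₁ + ω·b, a₂ ↦ a₂ + λ·b, a₃ ↦ a₃ + μ·b`,
where `ω = −(λ(l+2) + μ(m+2))/(4−γ)`. -/
def tau (l m lam mu : K) : Module.End K (Fin 3 → K) :=
  LinearMap.id +
    (lf ![-(lam*(l+2) + mu*(m+2))/(4 - l*m), lam, mu]).smulRight (bvec l m)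

/-- `τ` applied to a vector `(λ,μ) ∈ K²`. -/
def tauv (l m : K) (v : K × K) : Module.End K (Fin 3 → K) := tau l m v.1 v.2

def c1 (α β : K) : K × K := (α, β)
def c2 (l : K) : K × K := (-2, l)
def c3 (m : K) : K × K := (m, -2)

/-- `z₁ : a₁ ↦ −a₁ + (2/(4−γ))·b, a₂ ↦ −a₂, a₃ ↦ −a₃`. -/
def z1 (l m : K) : Module.End K (Fin 3 → K) :=
  -LinearMap.id + (lf ![2/(4 - l*m), 0, 0]).smulRight (bvec l m)

/-- `z₂ : a₂ ↦ −a₂ + (2/(l+2))·b, a₁ ↦ −a₁, a₃ ↦ −a₃`. -/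
def z2 (l m : K) : Module.End K (Fin 3 → K) :=
  -LinearMap.id + (lf ![0, 2/(l+2), 0]).smulRight (bvec l m)

/-- `z₃ : a₃ ↦ −a₃ + (2/(m+2))·b, a₁ ↦ −a₁, a₂ ↦ −a₂`. -/
def z3 (l m : K) : Module.End K (Fin 3 → K) :=
  -LinearMap.id + (lf ![0, 0, 2/(m+2)]).smulRight (bvec l m)

/-- The linear functional `(λ,μ) ↦ c.1·λ + c.2·μ` on `K²`. -/
def lf2 (c : K × K) : (K × K) →ₗ[K] K := c.1 • LinearMap.fst K K K + c.2 • LinearMap.snd K K K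

/-- `σ₁(λ,μ) = (λ,μ) − ((λ(l+2)+μ(m+2))/(4−γ))·(α,β)`. -/
def sigma1 (α β l m : K) : Module.End K (K × K) :=
  LinearMap.id - (lf2 ((l+2)/(4 - l*m), (m+2)/(4 - l*m))).smulRight (α, β)

/-- `σ₂(λ,μ) = (λ,μ) + λ·(−2,l)`. -/
def sigma2 (l : K) : Module.End K (K × K) :=
  LinearMap.id + (LinearMap.fst K K K).smulRight ((-2 : K), l)

/-- `σ₃(λ,μ) = (λ,μ) + μ·(m,−2)`. -/
def sigma3 (m : K) : Module.End K (K × K) :=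
  LinearMap.id + (LinearMap.snd K K K).smulRight (m, (-2 : K))

/-- The sequence `u_x` : `u_x(0)=0, u_x(1)=u_x(2)=1, u_x(3)=x−1,
u_x(n+4) = (x−2)·u_x(n+2) − u_x(n)`. -/
def useq (x : K) : ℕ → K
  | 0 => 0
  | 1 => 1
  | 2 => 1
  | 3 => x - 1
  | (n+4) => (x - 2) * useq x (n+2) - useq x n

/-! The three reflections `sᵢ` have linear forms vanishing on `b`, so `sᵢ'` is the reflection with
the same form and with root `aᵢ + λᵢ • b` in place of `aᵢ`. The transvection `T` along `b` with
`T a₂ = a₂ + λ₂ • b` and `T a₃ = a₃ + λ₃ • b` therefore conjugates `s₂` and `s₃` to `s₂'` and `s₃'`,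
and hence conjugates `(s₂ s₃)ⁿ = z₁` to `(s₂' s₃')ⁿ`. Now `-z₁` is a reflection with root `b`, and
so is its conjugate. Since the form of `s₁'` vanishes on `b`, the square of the product of `s₁'`
with this conjugate is a transvection along `b`, which is trivial exactly when the form of the
conjugate vanishes on the root `a₁ + λ₁ • b` of `s₁'`. This is the stated linear condition. -/

open Module (Dual preReflection preReflection_apply)
open LinearMap (transvection)

section Transvections

variable {R M : Type*} [Ring R] [AddCommGroup M] [Module R M]

theorem isUnit_transvection {f : Dual R M} {b : M} (hfb : f b = 0) :
    IsUnit (transvection f b : Module.End R M) :=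
  (Module.End.isUnit_iff _).mpr (LinearEquiv.transvection hfb).bijective

theorem transvection_eq_one_iff [IsDomain R] [Module.IsTorsionFree R M] {f : Dual R M} {b : M} :
    (transvection f b : Module.End R M) = 1 ↔ f = 0 ∨ b = 0 := by
  simp [LinearMap.ext_iff, LinearMap.transvection.apply, forall_or_right]

end Transvections

section Reflections

variable {R M : Type*} [CommRing R] [AddCommGroup M] [Module R M]

theorem preReflection_mul_transvection {φ : Dual R M} {b : M} (hφb : φ b = 0) (a : M) (t : R) :
    preReflection a φ * transvection (-t • φ) b = preReflection (a + t • b) φ := by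
  ext x
  simp only [Module.End.mul_apply, LinearMap.transvection.apply, preReflection_apply, map_add,
    map_smul, LinearMap.smul_apply, hφb]
  module

theorem semiconjBy_preReflection (T : Module.End R M) (a : M) (φ : Dual R M) :
    SemiconjBy T (preReflection a (φ ∘ₗ T)) (preReflection (T a) φ) := by
  ext x
  simp [preReflection_apply]

theorem semiconjBy_transvection_preReflection {φ : Dual R M} {b : M} (hφb : φ b = 0)
    (f : Dual R M) (a : M) :
    SemiconjBy (transvection f b) (preReflection a φ) (preReflection (a + f a • b) φ) := by
  have hφ : φ ∘ₗ transvection f b = φ := by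
    ext x
    simp [LinearMap.transvection.apply, hφb]
  simpa only [hφ, LinearMap.transvection.apply] using
    semiconjBy_preReflection (transvection f b) a φ

theorem semiconjBy_transvection_preReflection_self {f : Dual R M} {b : M} (hfb : f b = 0)
    (h : Dual R M) :
    SemiconjBy (transvection f b) (preReflection b h) (preReflection b (h - h b • f)) := by
  have hh : (h - h b • f) ∘ₗ transvection f b = h := by
    ext x
    simp [LinearMap.transvection.apply, hfb, mul_comm]
  have hb : transvection f b b = b := by simp [LinearMap.transvection.apply, hfb]
  simpa only [hh, hb] using semiconjBy_preReflection (transvection f b) b (h - h b • f)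

theorem preReflection_mul_preReflection_pow {φ₂ φ₃ f h : Dual R M} {a₂ a₃ b : M}
    (hφ₂ : φ₂ b = 0) (hφ₃ : φ₃ b = 0) (hfb : f b = 0) {n : ℕ}
    (hn : (preReflection a₂ φ₂ * preReflection a₃ φ₃) ^ n = -preReflection b h) :
    (preReflection (a₂ + f a₂ • b) φ₂ * preReflection (a₃ + f a₃ • b) φ₃) ^ n =
      -preReflection b (h - h b • f) := by
  have hpow := ((semiconjBy_transvection_preReflection hφ₂ f a₂).mul_right
    (semiconjBy_transvection_preReflection hφ₃ f a₃)).pow_right n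
  have hneg := (semiconjBy_transvection_preReflection_self hfb h).neg_right
  rw [hn] at hpow
  exact (isUnit_transvection hfb).mul_right_cancel (hpow.eq.symm.trans hneg.eq)

theorem preReflection_mul_preReflection_sq {φ h : Dual R M} {a b : M}
    (hφa : φ a = 2) (hφb : φ b = 0) (hhb : h b = 2) :
    (preReflection a φ * preReflection b h) ^ 2 = transvection (h a • φ) b := by
  ext x
  simp only [pow_two, Module.End.mul_apply, LinearMap.transvection.apply, preReflection_apply,
    map_sub, map_smul, LinearMap.smul_apply, hφa, hφb, hhb]
  module

theorem preReflection_mul_preReflection_sq_eq_one_iff [IsDomain R] [Module.IsTorsionFree R M]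
    [NeZero (2 : R)] {φ h : Dual R M} {a b : M}
    (hφa : φ a = 2) (hφb : φ b = 0) (hhb : h b = 2) :
    (preReflection a φ * preReflection b h) ^ 2 = 1 ↔ h a = 0 := by
  have hφ : φ ≠ 0 := fun h0 => two_ne_zero (α := R) (by simp [← hφa, h0])
  have hb : b ≠ 0 := fun h0 => two_ne_zero (α := R) (by simp [← hhb, h0])
  rw [preReflection_mul_preReflection_sq hφa hφb hhb, transvection_eq_one_iff]
  simp [hφ, hb]

theorem preReflection_mul_pow_sq_eq_one_iff [IsDomain R] [Module.IsTorsionFree R M]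
    [NeZero (2 : R)] {φ₁ φ₂ φ₃ f h : Dual R M} {a₁ a₂ a₃ b : M}
    (hφ₁a : φ₁ a₁ = 2) (hφ₁ : φ₁ b = 0) (hφ₂ : φ₂ b = 0) (hφ₃ : φ₃ b = 0) (hfb : f b = 0)
    (hhb : h b = 2) {n : ℕ}
    (hn : (preReflection a₂ φ₂ * preReflection a₃ φ₃) ^ n = -preReflection b h) (t : R) :
    (preReflection (a₁ + t • b) φ₁ *
        (preReflection (a₂ + f a₂ • b) φ₂ * preReflection (a₃ + f a₃ • b) φ₃) ^ n) ^ 2 = 1 ↔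
      h a₁ - 2 * f a₁ + 2 * t = 0 := by
  have hroot : φ₁ (a₁ + t • b) = 2 := by simp [hφ₁a, hφ₁]
  have hself : (h - (2 : R) • f) b = 2 := by simp [hhb, hfb]
  have hval : (h - (2 : R) • f) (a₁ + t • b) = h a₁ - 2 * f a₁ + 2 * t := by
    rw [map_add, map_smul, hself, LinearMap.sub_apply, LinearMap.smul_apply]
    simp only [smul_eq_mul, mul_comm t]
  rw [preReflection_mul_preReflection_pow hφ₂ hφ₃ hfb hn, hhb, mul_neg, neg_sq,
    preReflection_mul_preReflection_sq_eq_one_iff hroot hφ₁ hself, hval]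

end Reflections

section Coordinates

variable {F : Type*} [Field F]

theorem lf_apply (c x : Fin 3 → F) : lf c x = c 0 * x 0 + c 1 * x 1 + c 2 * x 2 := by
  simp [lf]

/-- The linear form of the reflection `s1 α β`, whose root is `a₁`. -/
def coroot1 (α β : F) : Dual F (Fin 3 → F) := lf ![2, -α, -β]

/-- The linear form of the reflection `s2 l`, whose root is `a₂`. -/
def coroot2 (l : F) : Dual F (Fin 3 → F) := lf ![-1, 2, -l]

/-- The linear form of the reflection `s3 m`, whose root is `a₃`. -/
def coroot3 (m : F) : Dual F (Fin 3 → F) := lf ![-1, -m, 2]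

/-- The linear form of the reflection `-z1 l m`, whose root is `b`, for `γ ≠ 4`. -/
def z1Form (l m : F) : Dual F (Fin 3 → F) := lf ![2 / (4 - l * m), 0, 0]

/-- The linear form of the transvection `tauv l m v` along `b`. For `γ ≠ 4`, its first coefficient
is the one that makes it vanish on `b`. -/
def tauForm (l m : F) (v : F × F) : Dual F (Fin 3 → F) :=
  lf ![-(v.1 * (l + 2) + v.2 * (m + 2)) / (4 - l * m), v.1, v.2]

theorem s1_eq_preReflection (α β : F) : s1 α β = preReflection (Pi.single 0 1) (coroot1 α β) := rfl

theorem s2_eq_preReflection (l : F) : s2 l = preReflection (Pi.single 1 1) (coroot2 l) := rfl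

theorem s3_eq_preReflection (m : F) : s3 m = preReflection (Pi.single 2 1) (coroot3 m) := rfl

theorem z1_eq_neg_preReflection (l m : F) : z1 l m = -preReflection (bvec l m) (z1Form l m) := by
  rw [preReflection, neg_sub', sub_neg_eq_add]
  rfl

theorem tauv_eq_transvection (l m : F) (v : F × F) :
    tauv l m v = transvection (tauForm l m v) (bvec l m) := rfl

theorem coroot1_bvec {α β l m : F}
    (hΔ : 8 - 2 * α - 2 * β - 2 * (l * m) - (α * l + β * m) = 0) :
    coroot1 α β (bvec l m) = 0 := by
  simp only [coroot1, bvec, lf_apply, Matrix.cons_val]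
  linear_combination hΔ

theorem coroot2_bvec (l m : F) : coroot2 l (bvec l m) = 0 := by
  simp only [coroot2, bvec, lf_apply, Matrix.cons_val]
  ring

theorem coroot3_bvec (l m : F) : coroot3 m (bvec l m) = 0 := by
  simp only [coroot3, bvec, lf_apply, Matrix.cons_val]
  ring

theorem z1Form_bvec {l m : F} (hγ : 4 - l * m ≠ 0) : z1Form l m (bvec l m) = 2 := by
  simp [z1Form, bvec, lf_apply, hγ]

theorem tauForm_bvec {l m : F} (hγ : 4 - l * m ≠ 0) (v : F × F) :
    tauForm l m v (bvec l m) = 0 := by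
  simp only [tauForm, bvec, lf_apply, Matrix.cons_val, div_mul_cancel₀ _ hγ]
  ring

theorem tauForm_smul (l m t : F) (v : F × F) : tauForm l m (t • v) = t • tauForm l m v := by
  refine LinearMap.ext fun x => ?_
  simp only [tauForm, LinearMap.smul_apply, lf_apply, Prod.smul_fst, Prod.smul_snd, smul_eq_mul,
    Matrix.cons_val]
  ring

theorem tauForm_c1 {α β l m : F}
    (hΔ : 8 - 2 * α - 2 * β - 2 * (l * m) - (α * l + β * m) = 0) (hγ : 4 - l * m ≠ 0) :
    tauForm l m (c1 α β) = -coroot1 α β := by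
  have hω : -(α * (l + 2) + β * (m + 2)) / (4 - l * m) = -2 := by
    rw [div_eq_iff hγ]
    linear_combination hΔ
  refine LinearMap.ext fun x => ?_
  simp only [tauForm, c1, coroot1, LinearMap.neg_apply, lf_apply, Matrix.cons_val, hω]
  ring

theorem tauForm_c2 {l m : F} (hγ : 4 - l * m ≠ 0) : tauForm l m (c2 l) = -coroot2 l := by
  have hω : -(-2 * (l + 2) + l * (m + 2)) / (4 - l * m) = 1 := by
    rw [div_eq_iff hγ]
    ring
  refine LinearMap.ext fun x => ?_
  simp only [tauForm, c2, coroot2, LinearMap.neg_apply, lf_apply, Matrix.cons_val, hω]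
  ring

theorem tauForm_c3 {l m : F} (hγ : 4 - l * m ≠ 0) : tauForm l m (c3 m) = -coroot3 m := by
  have hω : -(m * (l + 2) + -2 * (m + 2)) / (4 - l * m) = 1 := by
    rw [div_eq_iff hγ]
    ring
  refine LinearMap.ext fun x => ?_
  simp only [tauForm, c3, coroot3, LinearMap.neg_apply, lf_apply, Matrix.cons_val, hω]
  ring

theorem preReflection_mul_tauv_smul {l m : F} {c : F × F} {φ : Dual F (Fin 3 → F)}
    (hφb : φ (bvec l m) = 0) (hc : tauForm l m c = -φ) (a : Fin 3 → F) (t : F) :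
    preReflection a φ * tauv l m (t • c) = preReflection (a + t • bvec l m) φ := by
  rw [tauv_eq_transvection, tauForm_smul, hc, smul_neg, ← neg_smul,
    preReflection_mul_transvection hφb]

theorem s1_mul_tauv {α β l m : F}
    (hΔ : 8 - 2 * α - 2 * β - 2 * (l * m) - (α * l + β * m) = 0) (hγ : 4 - l * m ≠ 0) (t : F) :
    s1 α β * tauv l m (t • c1 α β) =
      preReflection (Pi.single 0 1 + t • bvec l m) (coroot1 α β) :=
  preReflection_mul_tauv_smul (coroot1_bvec hΔ) (tauForm_c1 hΔ hγ) _ t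

theorem s2_mul_tauv {l m : F} (hγ : 4 - l * m ≠ 0) (t : F) :
    s2 l * tauv l m (t • c2 l) = preReflection (Pi.single 1 1 + t • bvec l m) (coroot2 l) :=
  preReflection_mul_tauv_smul (coroot2_bvec l m) (tauForm_c2 hγ) _ t

theorem s3_mul_tauv {l m : F} (hγ : 4 - l * m ≠ 0) (t : F) :
    s3 m * tauv l m (t • c3 m) = preReflection (Pi.single 2 1 + t • bvec l m) (coroot3 m) :=
  preReflection_mul_tauv_smul (coroot3_bvec l m) (tauForm_c3 hγ) _ t

theorem coroot1_single_zero (α β : F) : coroot1 α β (Pi.single 0 1) = 2 := by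
  simp [coroot1, lf_apply]

theorem z1Form_single_zero (l m : F) : z1Form l m (Pi.single 0 1) = 2 / (4 - l * m) := by
  simp [z1Form, lf_apply]

theorem tauForm_single_zero (l m : F) (v : F × F) :
    tauForm l m v (Pi.single 0 1) = -(v.1 * (l + 2) + v.2 * (m + 2)) / (4 - l * m) := by
  simp [tauForm, lf_apply]

theorem tauForm_single_one (l m : F) (v : F × F) : tauForm l m v (Pi.single 1 1) = v.1 := by
  simp [tauForm, lf_apply]

theorem tauForm_single_two (l m : F) (v : F × F) : tauForm l m v (Pi.single 2 1) = v.2 := by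
  simp [tauForm, lf_apply]

theorem stmt13_general [NeZero (2 : F)] {α β l m : F}
    (hΔ : 8 - 2 * α - 2 * β - 2 * (l * m) - (α * l + β * m) = 0) (hγ : l * m ≠ 4) {n : ℕ}
    (hz : (s2 l * s3 m) ^ n = z1 l m) (lam1 lam2 lam3 : F) :
    ((s1 α β * tauv l m (lam1 • c1 α β)) *
        ((s2 l * tauv l m (lam2 • c2 l)) * (s3 m * tauv l m (lam3 • c3 m))) ^ n) ^ 2 = 1 ↔
      (4 - l * m) * lam1 + (l + 2) * lam2 + (m + 2) * lam3 = -1 := by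
  have hγ' : 4 - l * m ≠ 0 := sub_ne_zero.mpr hγ.symm
  rw [s2_eq_preReflection, s3_eq_preReflection, z1_eq_neg_preReflection] at hz
  have hsq := preReflection_mul_pow_sq_eq_one_iff (coroot1_single_zero α β) (coroot1_bvec hΔ)
    (coroot2_bvec l m) (coroot3_bvec l m) (tauForm_bvec hγ' (lam2, lam3)) (z1Form_bvec hγ') hz lam1
  rw [tauForm_single_one, tauForm_single_two, z1Form_single_zero, tauForm_single_zero] at hsq
  have hval : 2 / (4 - l * m) - 2 * (-(lam2 * (l + 2) + lam3 * (m + 2)) / (4 - l * m)) + 2 * lam1 =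
      2 / (4 - l * m) * ((4 - l * m) * lam1 + (l + 2) * lam2 + (m + 2) * lam3 + 1) := by
    field_simp
    ring
  rw [s1_mul_tauv hΔ hγ', s2_mul_tauv hγ', s3_mul_tauv hγ', hsq, hval,
    mul_eq_zero_iff_left (div_ne_zero two_ne_zero hγ'), add_eq_zero_iff_eq_neg]

end Coordinates

/-- Theorem 2: assume `Δ = 0`, `γ ≠ 4`, `(α,β) ≠ (0,0)`, and let
`n ≥ 1` with `(s₂s₃)ⁿ = z₁`.  With `s₁' = s₁ ∘ τ(λ₁c₁)`, `s₂' = s₂ ∘ τ(λ₂c₂)`,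
`s₃' = s₃ ∘ τ(λ₃c₃)`, one has `(s₁'(s₂'s₃')ⁿ)² = 1` iff
`(4−γ)λ₁ + (l+2)λ₂ + (m+2)λ₃ = −1`. -/
theorem stmt13 (α β l m : K)
    (hΔ : 8 - 2*α - 2*β - 2*(l*m) - (α*l + β*m) = 0) (hγ : l*m ≠ 4)
    (hab : ¬(α = 0 ∧ β = 0)) (n : ℕ) (hn : 1 ≤ n)
    (hz : (s2 l * s3 m)^n = z1 l m) (lam1 lam2 lam3 : K) :
    ((s1 α β * tauv l m (lam1 • c1 α β)) *
        ((s2 l * tauv l m (lam2 • c2 l)) * (s3 m * tauv l m (lam3 • c3 m)))^n)^2 = 1 ↔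
      (4 - l*m)*lam1 + (l+2)*lam2 + (m+2)*lam3 = -1 :=
  stmt13_general hΔ hγ hz lam1 lam2 lam3

end
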